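/- Let μ be a probability measure on {0,1}^{ℤ²} which is positively associated, such that μ-almost surely there exists exactly one infinite 0cluster, μ-almost surely there exists at most one infinite 1*cluster, and there is a constant c > 0 such that μ(x belongs to an infinite 1*cluster) ≥ c for every x ∈ ℤ². Then for every finite set Δ ⊂ ℤ² there exists a finite set Γ ⊂ ℤ² such that for all sites x, y ∉ Γ, the μ-probability that x and y are joined by a 1*path avoiding Δ is at least c²/2. -/

import Mathlib

/-! The theorem rests on a deterministic fact about the plane: if `Z` is the only infinite `0`cluster,
then an infinite `1*`cluster `I` has one end, so that removing a finite set `Δ` from `I` leaves at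
most one infinite component (`reach_of_infinite`) and only finitely many sites in finite components
(`finite_bad`).

One-endedness (`finite_or_finite`) is proved cohomologically, in place of a Jordan curve argument.
Cut every unit square by one of its diagonals, choosing it so that the edges of the resulting
triangulation connect the sites of spin `1` as `adjStar` does and the sites of spin `0` as `adj`
does. Let `h` be a mod 2 function on `I` which jumps only inside a finite set (for instance the
indicator of a component of `I` off `Δ`). Let `F` be the union of the finite `0`clusters near the
jumps, and let `f` be the coboundary of `h`, kept only on the edges inside `I` or touching `F`. This
is a finitely supported cochain on edges, and it is closed on all triangles not touching `Z`
(`cut_triangle`). Each edge lies in exactly two triangles, so the coboundary of `f` has total `0`;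
since `Z` is connected, this coboundary is also that of some finitely supported
cochain `ψ` on edges touching `Z` (`exists_cobd_eq`). Now `f - ψ` is closed with finite
support, hence the coboundary of a finitely supported `g` on sites (`exists_primitive`: the plane
has no compactly supported first cohomology). No edge inside `I` touches `Z`, so `h + g` is constant
on `I`, and `h` is constant off a finite set.

For the probabilistic part, let `B n` be the event that some site outside the `n`th box belongs to
an infinite `1*`cluster but not to an infinite component off `Δ`. By `finite_bad` and the uniqueness
of the infinite `1*`cluster, the probability of `B n` tends to `0`; choose `n` so that it is below
`c²/2`. For `x` and `y` outside the box, positive association shows that both are in infinite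
`1*`clusters with probability at least `c²`. Off `B n` they then lie in infinite components of the
same cluster off `Δ`, and by `reach_of_infinite` they are joined off `Δ`.
-/

open MeasureTheory ProbabilityTheory
open scoped ENNReal

namespace Percolation

/-- Sites of the square lattice. -/
abbrev Site : Type := ℤ × ℤ

/-- Configurations: spins `0`/`1` encoded as `false`/`true`. -/
abbrev Config : Type := Site → Bool

/-- Nearest-neighbour adjacency: Euclidean distance `1`. -/
def adj (x y : Site) : Prop :=
  (x.1 - y.1) ^ 2 + (x.2 - y.2) ^ 2 = 1

/-- `*`adjacency: Euclidean distance `1` or `√2`. -/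
def adjStar (x y : Site) : Prop :=
  x ≠ y ∧ |x.1 - y.1| ≤ 1 ∧ |x.2 - y.2| ≤ 1

/-- `x` and `y` are joined inside `G` by a path whose consecutive sites satisfy `R`. -/
def JoinedIn (R : Site → Site → Prop) (G : Set Site) (x y : Site) : Prop :=
  ∃ P : List Site, P.Chain' R ∧ (∀ z ∈ P, z ∈ G) ∧ P.head? = some x ∧ P.getLast? = some y

/-- `S` is a `0`cluster of `σ`: a maximal `adj`-connected subset of `σ⁻¹(0)`. -/
def IsCluster0 (σ : Config) (S : Set Site) : Prop :=
  S.Nonempty ∧ (∀ z ∈ S, σ z = false) ∧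
    (∀ x ∈ S, ∀ y ∈ S, JoinedIn adj S x y) ∧
    (∀ x ∈ S, ∀ y : Site, adj x y → σ y = false → y ∈ S)

/-- `S` is a `1*`cluster of `σ`: a maximal `adjStar`-connected subset of `σ⁻¹(1)`. -/
def IsCluster1 (σ : Config) (S : Set Site) : Prop :=
  S.Nonempty ∧ (∀ z ∈ S, σ z = true) ∧
    (∀ x ∈ S, ∀ y ∈ S, JoinedIn adjStar S x y) ∧
    (∀ x ∈ S, ∀ y : Site, adjStar x y → σ y = true → y ∈ S)

/-- `x` belongs to an infinite `1*`cluster of `σ`. -/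
def InInfinite1 (σ : Config) (x : Site) : Prop :=
  ∃ S : Set Site, IsCluster1 σ S ∧ S.Infinite ∧ x ∈ S

/-- There is exactly one infinite `0`cluster. -/
def UniqueInfinite0 (σ : Config) : Prop :=
  ∃! S : Set Site, IsCluster0 σ S ∧ S.Infinite

/-- There is exactly one infinite `1*`cluster. -/
def UniqueInfinite1 (σ : Config) : Prop :=
  ∃! S : Set Site, IsCluster1 σ S ∧ S.Infinite

/-- There is at most one infinite `1*`cluster. -/
def AtMostOneInfinite1 (σ : Config) : Prop :=
  ∀ S T : Set Site, IsCluster1 σ S → S.Infinite → IsCluster1 σ T → T.Infinite → S = T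

/-- An infinite `1*`cluster exists. -/
def ExistsInfinite1 (σ : Config) : Prop := ∃ S : Set Site, IsCluster1 σ S ∧ S.Infinite

/-- An infinite `0`cluster exists. -/
def ExistsInfinite0 (σ : Config) : Prop := ∃ S : Set Site, IsCluster0 σ S ∧ S.Infinite

/-- An increasing event. -/
def IncreasingEvent (A : Set Config) : Prop :=
  ∀ ⦃ξ η : Config⦄, ξ ∈ A → ξ ≤ η → η ∈ A

/-- Positive association: increasing events are positively correlated. -/
def PositivelyAssociated (μ : Measure Config) : Prop :=
  ∀ A B : Set Config, MeasurableSet A → MeasurableSet B →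
    IncreasingEvent A → IncreasingEvent B → μ A * μ B ≤ μ (A ∩ B)

/-- The cylinder event "`η` on `Δ`". -/
def cylEvent (Δ : Finset Site) (η : Site → Bool) : Set Config :=
  {σ | ∀ z ∈ Δ, σ z = η z}

/-- The σ-algebra generated by the spins outside `Δ`. -/
def outsideAlgebra (Δ : Finset Site) : MeasurableSpace Config :=
  MeasurableSpace.comap (fun σ (z : {z : Site // z ∉ Δ}) => σ z.1) inferInstance

/-- The bounded energy condition: `μ(η on Δ | ξ off Δ) ≥ c_{|Δ|}` for a.e. `ξ`, expressed
via integrated conditional probabilities against events of the outside σ-algebra. -/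
def BoundedEnergy (μ : Measure Config) : Prop :=
  ∀ n : ℕ, ∃ c : ℝ≥0∞, 0 < c ∧
    ∀ Δ : Finset Site, Δ.card = n → ∀ η : Site → Bool,
      ∀ B : Set Config, MeasurableSet[outsideAlgebra Δ] B →
        c * μ B ≤ μ (cylEvent Δ η ∩ B)

/-- The finite energy condition: `μ(η on Δ | ξ off Δ) > 0` for a.e. `ξ`, expressed
via integrated conditional probabilities against events of the outside σ-algebra. -/
def FiniteEnergy (μ : Measure Config) : Prop :=
  ∀ (Δ : Finset Site) (η : Site → Bool) (B : Set Config),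
    MeasurableSet[outsideAlgebra Δ] B → 0 < μ B → 0 < μ (cylEvent Δ η ∩ B)

/-- The tail σ-algebra. -/
def tailAlgebra : MeasurableSpace Config :=
  ⨅ Δ : Finset Site, outsideAlgebra Δ

/-- Translation of configurations by `v`. -/
def shift (v : Site) (σ : Config) : Config := fun z => σ (z + v)

/-- A site viewed as a complex number. -/
noncomputable def toC (z : Site) : ℂ := (z.1 : ℂ) + (z.2 : ℂ) * Complex.I

/-- Winding number around the origin of the polygonal curve through the sites of `P`. -/
noncomputable def winding (P : List Site) : ℝ :=
  (1 / (2 * Real.pi)) *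
    ((P.zip P.tail).map fun p => Complex.arg (toC p.2 / toC p.1)).sum

/-- Winding number of `P` around the site `w`. -/
noncomputable def windingAround (P : List Site) (w : Site) : ℝ :=
  winding (P.map fun z => z - w)

/-- The site `w` lies in the interior of the circuit `C`, i.e. is enclosed by `C`. -/
def circuitEncloses (C : List Site) (w : Site) : Prop :=
  w ∉ C ∧ windingAround (C ++ C.take 1) w ≠ 0

/-- A circuit: a path whose starting site is adjacent to its ending site. -/
def IsCircuit (C : List Site) : Prop :=
  C.Chain' adj ∧ ∃ h : C ≠ [], adj (C.getLast h) (C.head h)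

/-- A `*`circuit: a `*`path whose starting site is `*`adjacent to its ending site. -/
def IsStarCircuit (C : List Site) : Prop :=
  C.Chain' adjStar ∧ ∃ h : C ≠ [], adjStar (C.getLast h) (C.head h)

/-- A (finite) `1*`path with respect to `σ`. -/
def Is1StarPath (σ : Config) (P : List Site) : Prop :=
  P ≠ [] ∧ P.Chain' adjStar ∧ ∀ z ∈ P, σ z = true

/-- A (finite) `0`path with respect to `σ`. -/
def Is0Path (σ : Config) (P : List Site) : Prop :=
  P ≠ [] ∧ P.Chain' adj ∧ ∀ z ∈ P, σ z = false

/-- A `1*`circuit with respect to `σ`. -/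
def Is1StarCircuit (σ : Config) (C : List Site) : Prop :=
  IsStarCircuit C ∧ ∀ z ∈ C, σ z = true

/-- A `0`circuit with respect to `σ`. -/
def Is0Circuit (σ : Config) (C : List Site) : Prop :=
  IsCircuit C ∧ ∀ z ∈ C, σ z = false

/-- `C` is a circuit around `Δ`: every site of `Δ` is enclosed by `C`. -/
def CircuitAround (C : List Site) (Δ : Set Site) : Prop :=
  ∀ z ∈ Δ, circuitEncloses C z

/-- A mixed circuit with respect to `σ`: a self-avoiding `*`circuit consisting of a
self-avoiding `1*`path followed by a self-avoiding `0`path (either part may be empty). -/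
def IsMixedCircuit (σ : Config) (C : List Site) : Prop :=
  ∃ P Q : List Site, C = P ++ Q ∧ C.Nodup ∧
    P.Chain' adjStar ∧ Q.Chain' adj ∧
    (∀ z ∈ P, σ z = true) ∧ (∀ z ∈ Q, σ z = false) ∧ IsStarCircuit C

/-- `z` lies in the exterior of the circuit `C`. -/
def InExterior (C : List Site) (z : Site) : Prop :=
  z ∉ C ∧ ¬ circuitEncloses C z

/-- An infinite self-avoiding `1*`path with respect to `σ`. -/
def IsInfSA1StarPath (σ : Config) (f : ℕ → Site) : Prop :=
  Function.Injective f ∧ (∀ i, adjStar (f i) (f (i + 1))) ∧ ∀ i, σ (f i) = true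

/-- An infinite self-avoiding `0`path with respect to `σ`. -/
def IsInfSA0Path (σ : Config) (f : ℕ → Site) : Prop :=
  Function.Injective f ∧ (∀ i, adj (f i) (f (i + 1))) ∧ ∀ i, σ (f i) = false

/-- There exist `n` pairwise disjoint infinite self-avoiding `1*`paths. -/
def HasNDisjoint1 (σ : Config) (n : ℕ) : Prop :=
  ∃ f : Fin n → ℕ → Site, (∀ i, IsInfSA1StarPath σ (f i)) ∧
    ∀ i j, i ≠ j → Disjoint (Set.range (f i)) (Set.range (f j))

/-- A two-sided infinite self-avoiding `1*`path with respect to `σ`. -/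
def IsTwoSidedInf1 (σ : Config) (f : ℤ → Site) : Prop :=
  Function.Injective f ∧ (∀ i : ℤ, adjStar (f i) (f (i + 1))) ∧ ∀ i : ℤ, σ (f i) = true

/-- A `1*`path of `σ` from `x` to `y` avoiding `Δ`. -/
def starPathBetweenAvoiding (σ : Config) (Δ : Set Site) (x y : Site) (P : List Site) : Prop :=
  Is1StarPath σ P ∧ P.head? = some x ∧ P.getLast? = some y ∧ ∀ z ∈ P, z ∉ Δ

/-- `x` is on the left side of `Γ`. -/
def OnLeftSide (x : Site) (Γ : Set Site) : Prop :=
  ∃ d : ℕ, 0 < d ∧ (∀ z ∈ Γ, |z.1| ≤ (d : ℤ) ∧ |z.2| ≤ (d : ℤ)) ∧ x.1 ≤ -(d : ℤ)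

/-- `x` is on the right side of `Γ`. -/
def OnRightSide (x : Site) (Γ : Set Site) : Prop :=
  ∃ d : ℕ, 0 < d ∧ (∀ z ∈ Γ, |z.1| ≤ (d : ℤ) ∧ |z.2| ≤ (d : ℤ)) ∧ (d : ℤ) ≤ x.1

/-- The square `{-n, …, n}²`. -/
def square (n : ℕ) : Set Site := {z : Site | |z.1| ≤ (n : ℤ) ∧ |z.2| ≤ (n : ℤ)}

/-- The `*`boundary `∂*B` of a set of sites. -/
def starBoundary (B : Set Site) : Set Site :=
  {x | x ∉ B ∧ ∃ y ∈ B, adjStar x y}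

/-- The union of all infinite `1*`clusters of `σ`. -/
def InfinitePart1 (σ : Config) : Set Site := {z | InInfinite1 σ z}

/-- The filled infinite `1*`cluster `S₁*`: the infinite `1*`cluster together with all
finite `0`clusters `*`encircled by it. -/
def Fill (σ : Config) : Set Site :=
  InfinitePart1 σ ∪
    {z | ∃ F : Set Site, IsCluster0 σ F ∧ F.Finite ∧ z ∈ F ∧
      ∃ C : List Site, IsStarCircuit C ∧ (∀ w ∈ C, w ∈ InfinitePart1 σ) ∧
        ∀ w ∈ F, circuitEncloses C w}

/-- The indicator of the filled infinite `1*`cluster, as a point of `{0,1}^{ℤ²}`. -/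
noncomputable def fillInd (σ : Config) : Site → Bool :=
  fun z => @decide (z ∈ Fill σ) (Classical.propDecidable _)

/-- Exactly one infinite `0`cluster and exactly one infinite `1*`cluster coexist. -/
def CoexistUnique (σ : Config) : Prop := UniqueInfinite0 σ ∧ UniqueInfinite1 σ


/-! ### Cochains on a triangulation of the plane -/

/-- Edges of a triangulation of the plane with vertex set `ℤ²`: the horizontal edge to the right
of `(i, j)`, the vertical edge above `(i, j)`, and the diagonal of the unit square whose
lower left corner is `(i, j)`. -/
inductive TEdge
  | hor (i j : ℤ)
  | ver (i j : ℤ)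
  | diag (i j : ℤ)

/-- Triangles: each unit square, named by its lower left corner, is cut by its diagonal into the
triangle containing the bottom side and the triangle containing the top side. -/
inductive Tri
  | low (i j : ℤ)
  | up (i j : ℤ)

section Triangulation

open Classical

variable (M : ℤ → ℤ → Prop)

/-- First end of an edge. The predicate `M` says in which squares the diagonal goes from the
lower left to the upper right corner; in the other squares it is the antidiagonal. -/
noncomputable def fstEnd : TEdge → Site
  | .hor i j => (i, j)
  | .ver i j => (i, j)
  | .diag i j => if M i j then (i, j) else (i + 1, j)

/-- Second end of an edge. -/
noncomputable def sndEnd : TEdge → Site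
  | .hor i j => (i + 1, j)
  | .ver i j => (i, j + 1)
  | .diag i j => if M i j then (i + 1, j + 1) else (i, j + 1)

/-- The edge `e` has an end in `Z`. -/
def EdgeTouches (Z : Set Site) (e : TEdge) : Prop := fstEnd M e ∈ Z ∨ sndEnd M e ∈ Z

/-- The triangle `t` has a vertex in `Z`. -/
def TriTouches (Z : Set Site) : Tri → Prop
  | .low i j => (i, j) ∈ Z ∨ (i + 1, j) ∈ Z ∨ (if M i j then (i + 1, j + 1) else (i, j + 1)) ∈ Z
  | .up i j => (i, j + 1) ∈ Z ∨ (i + 1, j + 1) ∈ Z ∨ (if M i j then (i, j) else (i + 1, j)) ∈ Z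

/-- One of the two triangles containing a given edge. -/
noncomputable def fstTri : TEdge → Tri
  | .hor i j => .low i j
  | .ver i j => if M i j then .up i j else .low i j
  | .diag i j => .low i j

/-- The other triangle containing a given edge. -/
noncomputable def sndTri : TEdge → Tri
  | .hor i j => .up i (j - 1)
  | .ver i j => if M (i - 1) j then .low (i - 1) j else .up (i - 1) j
  | .diag i j => .up i j

/-- The coboundary operator, from finitely supported mod 2 cochains on edges to finitely supported
mod 2 cochains on triangles: an edge is sent to the sum of the two triangles containing it. -/
noncomputable def cobd : (TEdge →₀ ZMod 2) →ₗ[ZMod 2] (Tri →₀ ZMod 2) :=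
  Finsupp.linearCombination (ZMod 2)
    (fun e => Finsupp.single (fstTri M e) 1 + Finsupp.single (sndTri M e) 1)

lemma cobd_single (e : TEdge) (a : ZMod 2) :
    cobd M (Finsupp.single e a) =
      Finsupp.single (fstTri M e) a + Finsupp.single (sndTri M e) a := by
  simp [cobd]

/-- The value of a coboundary on a lower triangle is the sum over its three edges. -/
lemma cobd_low (f : TEdge →₀ ZMod 2) (i j : ℤ) :
    cobd M f (.low i j) = f (.hor i j) + f (.diag i j) +
      if M i j then f (.ver (i + 1) j) else f (.ver i j) := by
  induction f using Finsupp.induction_linear with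
  | zero => simp
  | add f g hf hg => rw [map_add, Finsupp.add_apply, hf, hg]; split_ifs <;> simp <;> ring
  | single e a =>
    rw [cobd_single]
    cases e with
    | hor k l => simp [fstTri, sndTri, Finsupp.single_apply]
    | diag k l => simp [fstTri, sndTri, Finsupp.single_apply]
    | ver k l =>
      simp only [fstTri, sndTri, Finsupp.add_apply, Finsupp.single_apply]
      by_cases hM : M i j
      · by_cases hk : k = i + 1 ∧ l = j
        · obtain ⟨rfl, rfl⟩ := hk
          simp [hM]
          split_ifs <;> simp_all
        · have h1 : ¬ ((if M k l then Tri.up k l else Tri.low k l) = Tri.low i j) := by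
            split_ifs <;> simp; grind
          have h2 : ¬ ((if M (k - 1) l then Tri.low (k - 1) l else Tri.up (k - 1) l)
              = Tri.low i j) := by
            split_ifs <;> simp; grind
          simp [h1, h2, hM, hk]
      · by_cases hk : k = i ∧ l = j
        · obtain ⟨rfl, rfl⟩ := hk
          simp [hM]
          split_ifs <;> simp_all
        · have h1 : ¬ ((if M k l then Tri.up k l else Tri.low k l) = Tri.low i j) := by
            split_ifs <;> simp; grind
          have h2 : ¬ ((if M (k - 1) l then Tri.low (k - 1) l else Tri.up (k - 1) l)
              = Tri.low i j) := by
            split_ifs <;> simp; grind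
          simp [h1, h2, hM, hk]

/-- The value of a coboundary on an upper triangle is the sum over its three edges. -/
lemma cobd_up (f : TEdge →₀ ZMod 2) (i j : ℤ) :
    cobd M f (.up i j) = f (.hor i (j + 1)) + f (.diag i j) +
      if M i j then f (.ver i j) else f (.ver (i + 1) j) := by
  induction f using Finsupp.induction_linear with
  | zero => simp
  | add f g hf hg => rw [map_add, Finsupp.add_apply, hf, hg]; split_ifs <;> simp <;> ring
  | single e a =>
    rw [cobd_single]
    cases e with
    | hor k l => simp [fstTri, sndTri, Finsupp.single_apply, sub_eq_iff_eq_add]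
    | diag k l => simp [fstTri, sndTri, Finsupp.single_apply]
    | ver k l =>
      simp only [fstTri, sndTri, Finsupp.add_apply, Finsupp.single_apply]
      by_cases hM : M i j
      · by_cases hk : k = i ∧ l = j
        · obtain ⟨rfl, rfl⟩ := hk
          simp [hM]
          split_ifs <;> simp_all
        · have h1 : ¬ ((if M k l then Tri.up k l else Tri.low k l) = Tri.up i j) := by
            split_ifs <;> simp; grind
          have h2 : ¬ ((if M (k - 1) l then Tri.low (k - 1) l else Tri.up (k - 1) l)
              = Tri.up i j) := by
            split_ifs <;> simp; grind
          simp [h1, h2, hM, hk]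
      · by_cases hk : k = i + 1 ∧ l = j
        · obtain ⟨rfl, rfl⟩ := hk
          simp [hM]
          split_ifs <;> simp_all
        · have h1 : ¬ ((if M k l then Tri.up k l else Tri.low k l) = Tri.up i j) := by
            split_ifs <;> simp; grind
          have h2 : ¬ ((if M (k - 1) l then Tri.low (k - 1) l else Tri.up (k - 1) l)
              = Tri.up i j) := by
            split_ifs <;> simp; grind
          simp [h1, h2, hM, hk]

/-- Sum of the values of a finitely supported cochain on triangles. -/
noncomputable def total : (Tri →₀ ZMod 2) →ₗ[ZMod 2] ZMod 2 :=
  Finsupp.linearCombination (ZMod 2) (fun _ => 1)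

lemma total_cobd (f : TEdge →₀ ZMod 2) : total (cobd M f) = 0 := by
  induction f using Finsupp.induction_linear with
  | zero => simp
  | add f g hf hg => rw [map_add, map_add, hf, hg, add_zero]
  | single e a => rw [cobd_single]; simp [total, CharTwo.add_self_eq_zero]

/-- Coboundaries of cochains supported on edges touching `Z`. -/
noncomputable def cobdsAt (Z : Set Site) : Submodule (ZMod 2) (Tri →₀ ZMod 2) :=
  (Finsupp.supported (ZMod 2) (ZMod 2) {e | EdgeTouches M Z e}).map (cobd M)

/-- Two triangles are equivalent when their sum is a coboundary of edges touching `Z`. -/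
def TriEquiv (Z : Set Site) (s t : Tri) : Prop :=
  (Finsupp.single s 1 - Finsupp.single t 1 : Tri →₀ ZMod 2) ∈ cobdsAt M Z

variable {M} {Z : Set Site}

lemma TriEquiv.refl (s : Tri) : TriEquiv M Z s s := by simp [TriEquiv]

lemma TriEquiv.symm {s t : Tri} (h : TriEquiv M Z s t) : TriEquiv M Z t s := by
  have := (cobdsAt M Z).neg_mem h
  rwa [neg_sub] at this

lemma TriEquiv.trans {s t u : Tri} (h : TriEquiv M Z s t) (h' : TriEquiv M Z t u) :
    TriEquiv M Z s u := by
  have := (cobdsAt M Z).add_mem h h'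
  rwa [sub_add_sub_cancel] at this

lemma triEquiv_of_edge (e : TEdge) (he : EdgeTouches M Z e) :
    TriEquiv M Z (fstTri M e) (sndTri M e) := by
  refine ⟨Finsupp.single e 1, ?_, ?_⟩
  · exact Finsupp.single_mem_supported _ _ he
  · rw [cobd_single, sub_eq_add_neg]
    congr 1
    ext t
    simp [CharTwo.neg_eq]

/-- The triangles around a site `(i, j)` of `Z` are pairwise equivalent, since consecutive ones
share an edge at `(i, j)`. -/
lemma triEquiv_around {i j : ℤ} (hz : (i, j) ∈ Z) (t : Tri) (ht : TriTouches M {(i, j)} t) :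
    TriEquiv M Z (.low i j) t := by
  -- `low i j`, `low (i-1) j`, `up i (j-1)`, `up (i-1) (j-1)` lie in the four squares at `(i, j)`.
  have h1 : TriEquiv M Z (.low i j) (.up i (j - 1)) :=
    triEquiv_of_edge (.hor i j) (Or.inl hz)
  have h2 : TriEquiv M Z (.low (i - 1) j) (.up (i - 1) (j - 1)) :=
    triEquiv_of_edge (.hor (i - 1) j) (Or.inr (by simpa [sndEnd] using hz))
  have d0 : M i j → TriEquiv M Z (.low i j) (.up i j) := fun h =>
    triEquiv_of_edge (.diag i j) (Or.inl (by simpa [fstEnd, h] using hz))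
  have d1 : ¬ M (i - 1) j → TriEquiv M Z (.low (i - 1) j) (.up (i - 1) j) := fun h =>
    triEquiv_of_edge (.diag (i - 1) j) (Or.inl (by simpa [fstEnd, h] using hz))
  have d2 : ¬ M i (j - 1) → TriEquiv M Z (.low i (j - 1)) (.up i (j - 1)) := fun h =>
    triEquiv_of_edge (.diag i (j - 1)) (Or.inr (by simpa [sndEnd, h] using hz))
  have d3 : M (i - 1) (j - 1) → TriEquiv M Z (.low (i - 1) (j - 1)) (.up (i - 1) (j - 1)) :=
    fun h => triEquiv_of_edge (.diag (i - 1) (j - 1)) (Or.inr (by simpa [sndEnd, h] using hz))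
  have h3 : TriEquiv M Z (.low i j) (.low (i - 1) j) := by
    have h := triEquiv_of_edge (M := M) (Z := Z) (.ver i j) (Or.inl hz)
    simp only [fstTri, sndTri] at h
    have ha : TriEquiv M Z (.low i j) (if M i j then Tri.up i j else Tri.low i j) := by
      split_ifs with hM
      · exact d0 hM
      · exact TriEquiv.refl _
    have hb : TriEquiv M Z (if M (i - 1) j then Tri.low (i - 1) j else Tri.up (i - 1) j)
        (.low (i - 1) j) := by
      split_ifs with hM
      · exact TriEquiv.refl _
      · exact (d1 hM).symm
    exact (ha.trans h).trans hb
  have h4 := h3.trans h2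
  cases t with
  | low k l =>
    simp only [TriTouches, Set.mem_singleton_iff, Prod.mk.injEq] at ht
    by_cases hM : M k l
    · simp only [hM, if_true, Prod.mk.injEq] at ht
      rcases ht with ⟨rfl, rfl⟩ | ⟨rfl, rfl⟩ | ⟨rfl, rfl⟩
      · exact TriEquiv.refl _
      · simpa using h3
      · simp only [add_sub_cancel_right] at h4 d3
        exact h4.trans (d3 hM).symm
    · simp only [hM, if_false, Prod.mk.injEq] at ht
      rcases ht with ⟨rfl, rfl⟩ | ⟨rfl, rfl⟩ | ⟨rfl, rfl⟩
      · exact TriEquiv.refl _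
      · simpa using h3
      · simp only [add_sub_cancel_right] at h1 d2
        exact h1.trans (d2 hM).symm
  | up k l =>
    simp only [TriTouches, Set.mem_singleton_iff, Prod.mk.injEq] at ht
    by_cases hM : M k l
    · simp only [hM, if_true, Prod.mk.injEq] at ht
      rcases ht with ⟨rfl, rfl⟩ | ⟨rfl, rfl⟩ | ⟨rfl, rfl⟩
      · simpa using h1
      · simpa using h4
      · exact d0 hM
    · simp only [hM, if_false, Prod.mk.injEq] at ht
      rcases ht with ⟨rfl, rfl⟩ | ⟨rfl, rfl⟩ | ⟨rfl, rfl⟩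
      · simpa using h1
      · simpa using h4
      · simp only [add_sub_cancel_right] at h3 d1
        exact h3.trans (d1 hM)

lemma triTouches_iff (t : Tri) :
    TriTouches M Z t ↔ ∃ z ∈ Z, TriTouches M {z} t := by
  cases t <;> simp [TriTouches, exists_or, and_or_left]

/-- `x` and `y` are equal or joined by a path of `R`-steps inside `G`. -/
def Reach (R : Site → Site → Prop) (G : Set Site) : Site → Site → Prop :=
  Relation.ReflTransGen (fun u v => R u v ∧ u ∈ G ∧ v ∈ G)

lemma adj_cases {u v : Site} (h : adj u v) :
    v = (u.1 + 1, u.2) ∨ v = (u.1, u.2 + 1) ∨ u = (v.1 + 1, v.2) ∨ u = (v.1, v.2 + 1) := by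
  obtain ⟨a, b⟩ := u
  obtain ⟨c, d⟩ := v
  simp only [adj] at h
  simp only [Prod.mk.injEq]
  have h1 : (a - c) ≤ 1 := by nlinarith
  have h2 : -1 ≤ (a - c) := by nlinarith
  have h3 : (b - d) ≤ 1 := by nlinarith
  have h4 : -1 ≤ (b - d) := by nlinarith
  obtain h5 | h5 | h5 : a - c = -1 ∨ a - c = 0 ∨ a - c = 1 := by omega
  all_goals
    rw [h5] at h
    obtain h6 | h6 | h6 : b - d = -1 ∨ b - d = 0 ∨ b - d = 1 := by omega
    all_goals
      rw [h6] at h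
      first
        | (exfalso; norm_num at h; done)
        | omega

lemma triEquiv_right {i j : ℤ} (h' : (i + 1, j) ∈ Z) :
    TriEquiv M Z (.low i j) (.low (i + 1) j) :=
  (triEquiv_around h' (.low i j) (by simp [TriTouches])).symm

lemma triEquiv_above {i j : ℤ} (h : (i, j) ∈ Z) (h' : (i, j + 1) ∈ Z) :
    TriEquiv M Z (.low i j) (.low i (j + 1)) := by
  by_cases hM : M i j
  · exact (triEquiv_around h (.up i j) (by simp [TriTouches, hM])).trans
      (triEquiv_around h' (.up i j) (by simp [TriTouches])).symm
  · exact (triEquiv_around h' (.low i j) (by simp [TriTouches, hM])).symm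

lemma triEquiv_of_reach {z w : Site} (h : Reach adj Z z w) :
    TriEquiv M Z (.low z.1 z.2) (.low w.1 w.2) := by
  induction h with
  | refl => exact TriEquiv.refl _
  | @tail u v _ huv ih =>
    refine ih.trans ?_
    obtain ⟨hadj, hu, hv⟩ := huv
    rcases adj_cases hadj with h | h | h | h
    · subst h; exact triEquiv_right hv
    · subst h; exact triEquiv_above hu hv
    · subst h; exact (triEquiv_right hu).symm
    · subst h; exact (triEquiv_above hv hu).symm

/-- For connected `Z`, a cochain of total `0` on triangles touching `Z` is the coboundary of a
cochain on edges touching `Z`. -/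
lemma exists_cobd_eq (hconn : ∀ z ∈ Z, ∀ w ∈ Z, Reach adj Z z w) (τ : Tri →₀ ZMod 2)
    (hτ : ∀ t, τ t ≠ 0 → TriTouches M Z t) (h0 : total τ = 0) :
    ∃ ψ : TEdge →₀ ZMod 2, (∀ e, ψ e ≠ 0 → EdgeTouches M Z e) ∧ cobd M ψ = τ := by
  suffices h : τ ∈ cobdsAt M Z by
    obtain ⟨ψ, hψ, rfl⟩ := h
    refine ⟨ψ, fun e he => ?_, rfl⟩
    exact (Finsupp.mem_supported _ _).1 hψ (by simpa using he)
  by_cases hZ : Z.Nonempty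
  swap
  · have : τ = 0 := by
      ext t
      by_contra hne
      obtain ⟨z, hz, -⟩ := (triTouches_iff t).1 (hτ t hne)
      exact hZ ⟨z, hz⟩
    rw [this]; exact Submodule.zero_mem _
  obtain ⟨z, hz⟩ := hZ
  -- Modulo coboundaries every triangle touching `Z` may be moved to the fixed one `low z`.
  have key : τ - Finsupp.single (.low z.1 z.2) (total τ) ∈ cobdsAt M Z := by
    have : τ - Finsupp.single (.low z.1 z.2) (total τ) =
        τ.sum fun t a => a • (Finsupp.single t 1 - Finsupp.single (.low z.1 z.2) 1) := by
      simp only [smul_sub, Finsupp.smul_single, smul_eq_mul, mul_one, Finsupp.sum_sub,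
        Finsupp.sum_single]
      congr 1
      simp [total, Finsupp.linearCombination_apply, Finsupp.sum, Finsupp.single_finsetSum]
    rw [this]
    refine Submodule.sum_mem _ fun t ht => Submodule.smul_mem _ _ ?_
    obtain ⟨w, hw, hwt⟩ := (triTouches_iff t).1 (hτ t (by simpa using ht))
    exact ((triEquiv_around hw t hwt).symm).trans (triEquiv_of_reach (hconn w hw z hz))
  simpa [h0] using key

lemma exists_box (f : TEdge →₀ ZMod 2) : ∃ N : ℤ, 0 ≤ N ∧ ∀ i j : ℤ, (N < |i| ∨ N < |j|) →
    f (.hor i j) = 0 ∧ f (.ver i j) = 0 ∧ f (.diag i j) = 0 := by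
  induction f using Finsupp.induction_linear with
  | zero => exact ⟨0, le_rfl, by simp⟩
  | add f g hf hg =>
    obtain ⟨N, hN, h⟩ := hf
    obtain ⟨K, hK, h'⟩ := hg
    refine ⟨max N K, by positivity, fun i j hij => ?_⟩
    have h1 := h i j (by grind)
    have h2 := h' i j (by grind)
    simp [h1, h2]
  | single e a =>
    cases e with
    | hor k l | ver k l | diag k l =>
      refine ⟨max |k| |l|, by positivity, fun i j hij => ?_⟩
      have : ¬ (k = i ∧ l = j) := by rintro ⟨rfl, rfl⟩; grind
      simp [this]

/-- A finitely supported closed cochain on edges is the coboundary of a finitely supported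
function on sites. -/
lemma exists_primitive (f : TEdge →₀ ZMod 2) (hf : cobd M f = 0) :
    ∃ g : Site → ZMod 2, {z | g z ≠ 0}.Finite ∧
      ∀ e, f e = g (fstEnd M e) + g (sndEnd M e) := by
  obtain ⟨N, hN, hbox⟩ := exists_box f
  have hlow : ∀ i j, _ := fun i j => (cobd_low M f i j).symm.trans (by rw [hf])
  have hup : ∀ i j, _ := fun i j => (cobd_up M f i j).symm.trans (by rw [hf])
  -- Adding the two triangles of a square eliminates the diagonal.
  have hsq : ∀ i j, f (.ver (i + 1) j) = f (.ver i j) + f (.hor i j) + f (.hor i (j + 1)) := by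
    intro i j
    have h1 := hlow i j
    have h2 := hup i j
    split_ifs at h1 h2 <;> grind
  -- Integrate along horizontal lines, starting far to the left.
  let g : Site → ZMod 2 := fun z => ∑ k ∈ Finset.Ico (-N - 1) z.1, f (.hor k z.2)
  have ghor : ∀ i j, f (.hor i j) = g (i, j) + g (i + 1, j) := by
    intro i j
    by_cases hi : -N - 1 ≤ i
    · have : g (i + 1, j) = g (i, j) + f (.hor i j) := by
        simp only [g]
        rw [← Finset.insert_Ico_right_eq_Ico_add_one hi, Finset.sum_insert (by simp), add_comm]
      grind
    · rw [(hbox i j (by left; rw [abs_of_neg (by omega)]; omega)).1]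
      simp only [g]
      rw [Finset.Ico_eq_empty (by omega), Finset.Ico_eq_empty (by omega)]
      simp
  have gleft : ∀ i j, i ≤ -N - 1 → g (i, j) = 0 := by
    intro i j hi
    simp only [g]
    rw [Finset.Ico_eq_empty (by omega)]; simp
  have gver : ∀ i j, f (.ver i j) = g (i, j) + g (i, j + 1) := by
    intro i j
    by_cases hi : i ≤ -N - 1
    · rw [(hbox i j (by left; rw [abs_of_neg (by omega)]; omega)).2.1, gleft _ _ hi, gleft _ _ hi]
      simp
    · refine Int.leInduction (m := -N - 1)
        (motive := fun i _ => f (.ver i j) = g (i, j) + g (i, j + 1)) ?_ ?_ i (by omega)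
      · rw [(hbox _ j (by left; rw [abs_of_neg (by omega)]; omega)).2.1,
          gleft _ _ le_rfl, gleft _ _ le_rfl]
        simp
      · intro n hn ih
        have h1 := hsq n j
        have h2 := ghor n j
        have h3 := ghor n (j + 1)
        grind
  have gtop : ∀ i j, N < |j| → g (i, j) = 0 := by
    intro i j hj
    exact Finset.sum_eq_zero fun k _ => (hbox k j (Or.inr hj)).1
  -- To the right of the box `g` is constant on vertical lines, and it vanishes high up.
  have gright : ∀ i j, N < i → g (i, j) = 0 := by
    intro i j hi
    by_cases hj : N < j
    · exact gtop i j (lt_of_lt_of_le hj (le_abs_self _))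
    · refine Int.leInductionDown (m := N + 1) (motive := fun j _ => g (i, j) = 0)
        ?_ ?_ j (by omega)
      · exact gtop _ _ (by rw [abs_of_pos (by omega)]; omega)
      · intro n hn ih
        have h1 := gver i (n - 1)
        rw [(hbox i (n - 1) (by left; rw [abs_of_pos (by omega)]; omega)).2.1,
          sub_add_cancel, ih] at h1
        simpa using h1.symm
  refine ⟨g, ?_, ?_⟩
  · refine ((Set.finite_Icc (-N - 1) (N + 1)).prod (Set.finite_Icc (-N - 1) (N + 1))).subset ?_
    rintro ⟨i, j⟩ hij
    simp only [Set.mem_ofPred_eq] at hij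
    simp only [Set.mem_prod, Set.mem_Icc]
    have a1 : ¬ i ≤ -N - 1 := fun h => hij (gleft i j h)
    have a2 : ¬ N < i := fun h => hij (gright i j h)
    have a3 : ¬ N < |j| := fun h => hij (gtop i j h)
    rw [not_lt, abs_le] at a3
    omega
  · rintro (⟨i, j⟩ | ⟨i, j⟩ | ⟨i, j⟩)
    · exact ghor i j
    · exact gver i j
    · have h1 := hlow i j
      have h2 := ghor i j
      have h3 := gver i j
      have h4 := gver (i + 1) j
      simp only [fstEnd, sndEnd]
      split_ifs at h1 ⊢ <;> grind

end Triangulation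

/-! ### One-endedness of `1*`clusters -/

section Clusters

open Classical

/-- The sites at sup-distance at most `1` from `A`. -/
def nbhd (A : Set Site) : Set Site := {y | ∃ x ∈ A, |x.1 - y.1| ≤ 1 ∧ |x.2 - y.2| ≤ 1}

lemma finite_nbhd {A : Set Site} (hA : A.Finite) : (nbhd A).Finite := by
  have : nbhd A ⊆ ⋃ x ∈ A, (Set.Icc (x.1 - 1) (x.1 + 1) ×ˢ Set.Icc (x.2 - 1) (x.2 + 1)) := by
    rintro y ⟨x, hx, h1, h2⟩
    rw [abs_le] at h1 h2
    simp only [Set.mem_iUnion, Set.mem_prod, Set.mem_Icc]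
    exact ⟨x, hx, by omega⟩
  exact (hA.biUnion fun x _ => (Set.finite_Icc _ _).prod (Set.finite_Icc _ _)).subset this

lemma finite_edgeTouches (M : ℤ → ℤ → Prop) {A : Set Site} (hA : A.Finite) :
    {e | EdgeTouches M A e}.Finite := by
  have : {e | EdgeTouches M A e} ⊆ (fun z : Site => TEdge.hor z.1 z.2) '' nbhd A ∪
      (fun z : Site => TEdge.ver z.1 z.2) '' nbhd A ∪
      (fun z : Site => TEdge.diag z.1 z.2) '' nbhd A := by
    rintro (⟨i, j⟩ | ⟨i, j⟩ | ⟨i, j⟩) h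
    · refine Or.inl (Or.inl ⟨(i, j), ?_, rfl⟩)
      rcases h with h | h
      all_goals exact ⟨_, h, by simp [fstEnd, sndEnd]⟩
    · refine Or.inl (Or.inr ⟨(i, j), ?_, rfl⟩)
      rcases h with h | h
      all_goals exact ⟨_, h, by simp [fstEnd, sndEnd]⟩
    · refine Or.inr ⟨(i, j), ?_, rfl⟩
      rcases h with h | h
      all_goals exact ⟨_, h, by simp only [fstEnd, sndEnd]; split_ifs <;> simp⟩
  have hf := finite_nbhd hA
  exact (((hf.image _).union (hf.image _)).union (hf.image _)).subset this

lemma adj_symm {u v : Site} (h : adj u v) : adj v u := by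
  simp only [adj] at *; linarith

lemma adjStar_symm {u v : Site} (h : adjStar u v) : adjStar v u := by
  obtain ⟨h1, h2, h3⟩ := h
  exact ⟨h1.symm, by rwa [abs_sub_comm], by rwa [abs_sub_comm]⟩

lemma adjStar_cases {u v : Site} (h : adjStar u v) : ∃ i j : ℤ,
    (u = (i, j) ∧ v = (i + 1, j)) ∨ (v = (i, j) ∧ u = (i + 1, j)) ∨
    (u = (i, j) ∧ v = (i, j + 1)) ∨ (v = (i, j) ∧ u = (i, j + 1)) ∨
    (u = (i, j) ∧ v = (i + 1, j + 1)) ∨ (v = (i, j) ∧ u = (i + 1, j + 1)) ∨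
    (u = (i + 1, j) ∧ v = (i, j + 1)) ∨ (v = (i + 1, j) ∧ u = (i, j + 1)) := by
  obtain ⟨a, b⟩ := u
  obtain ⟨c, d⟩ := v
  obtain ⟨h1, h2, h3⟩ := h
  simp only [ne_eq, Prod.mk.injEq] at h1
  rw [abs_le] at h2 h3
  refine ⟨min a c, min b d, ?_⟩
  simp only [Prod.mk.injEq]
  omega

lemma Reach.symm {R : Site → Site → Prop} (hR : ∀ {u v}, R u v → R v u) {G : Set Site}
    {x y : Site} (h : Reach R G x y) : Reach R G y x := by
  induction h with
  | refl => exact Relation.ReflTransGen.refl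
  | tail _ hbc ih => exact Relation.ReflTransGen.head ⟨hR hbc.1, hbc.2.2, hbc.2.1⟩ ih

lemma Reach.trans {R : Site → Site → Prop} {G : Set Site} {x y z : Site}
    (h : Reach R G x y) (h' : Reach R G y z) : Reach R G x z :=
  Relation.ReflTransGen.trans h h'

lemma Reach.mem {R : Site → Site → Prop} {G : Set Site} {x y : Site}
    (h : Reach R G x y) (hx : x ∈ G) : y ∈ G := by
  induction h with
  | refl => exact hx
  | tail _ hbc _ => exact hbc.2.2

/-- A set that contains `x` and is closed under steps inside `G` contains everything reachable
from `x`, and the connection takes place inside it. -/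
lemma Reach.inside {R : Site → Site → Prop} {G S : Set Site} {x y : Site}
    (h : Reach R G x y) (hx : x ∈ S) (hS : ∀ u ∈ S, ∀ v, R u v → v ∈ G → v ∈ S) :
    y ∈ S ∧ Reach R S x y := by
  induction h with
  | refl => exact ⟨hx, Relation.ReflTransGen.refl⟩
  | tail _ hbc ih =>
    have := hS _ ih.1 _ hbc.1 hbc.2.2
    exact ⟨this, ih.2.tail ⟨hbc.1, ih.1, this⟩⟩

lemma joinedIn_iff {R : Site → Site → Prop} {G : Set Site} {x y : Site} :
    JoinedIn R G x y ↔ x ∈ G ∧ Reach R G x y := by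
  constructor
  · rintro ⟨P, hc, hG, hx, hy⟩
    induction P generalizing x with
    | nil => simp at hx
    | cons a P ih =>
      simp only [List.head?_cons, Option.some.injEq] at hx
      subst hx
      refine ⟨hG _ (by simp), ?_⟩
      cases P with
      | nil =>
        simp only [List.getLast?_singleton, Option.some.injEq] at hy
        subst hy
        exact Relation.ReflTransGen.refl
      | cons b P =>
        have hc' := List.isChain_cons_cons.1 hc
        obtain ⟨hb, hr⟩ := ih (x := b) hc'.2 (fun z hz => hG z (List.mem_cons_of_mem _ hz)) rfl
          (by simpa using hy)
        exact Relation.ReflTransGen.head ⟨hc'.1, hG _ (by simp), hb⟩ hr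
  · rintro ⟨hx, h⟩
    induction h using Relation.ReflTransGen.head_induction_on with
    | refl => exact ⟨[y], List.isChain_singleton _, by simpa using hx, rfl, rfl⟩
    | head hab _ ih =>
      obtain ⟨P, hc, hG, hh, hl⟩ := ih hab.2.2
      cases P with
      | nil => simp at hh
      | cons b P =>
        simp only [List.head?_cons, Option.some.injEq] at hh
        subst hh
        refine ⟨_ :: b :: P, List.isChain_cons_cons.2 ⟨hab.1, hc⟩, ?_, rfl, by simpa using hl⟩
        intro z hz
        rcases List.mem_cons.1 hz with rfl | hz
        · exact hab.2.1
        · exact hG z hz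

lemma isCluster0_reach {σ : Config} {x : Site} (hx : σ x = false) :
    IsCluster0 σ {y | Reach adj {z | σ z = false} x y} := by
  refine ⟨⟨x, Relation.ReflTransGen.refl⟩, fun z hz => Reach.mem hz hx, ?_, ?_⟩
  · intro u hu v hv
    refine joinedIn_iff.2 ⟨hu, ?_⟩
    exact (Reach.inside ((Reach.symm adj_symm hu).trans hv) hu fun a ha b hab hb =>
      Relation.ReflTransGen.tail ha ⟨hab, Reach.mem ha hx, hb⟩).2
  · intro u hu v huv hv
    exact Relation.ReflTransGen.tail hu ⟨huv, Reach.mem hu hx, hv⟩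

lemma isCluster1_reach {σ : Config} {x : Site} (hx : σ x = true) :
    IsCluster1 σ {y | Reach adjStar {z | σ z = true} x y} := by
  refine ⟨⟨x, Relation.ReflTransGen.refl⟩, fun z hz => Reach.mem hz hx, ?_, ?_⟩
  · intro u hu v hv
    refine joinedIn_iff.2 ⟨hu, ?_⟩
    exact (Reach.inside ((Reach.symm adjStar_symm hu).trans hv) hu fun a ha b hab hb =>
      Relation.ReflTransGen.tail ha ⟨hab, Reach.mem ha hx, hb⟩).2
  · intro u hu v huv hv
    exact Relation.ReflTransGen.tail hu ⟨huv, Reach.mem hu hx, hv⟩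

/-- The squares cut along the main diagonal: those in which both ends of it carry spin `1`.
With this choice the edges of the triangulation connect the sites of spin `1` exactly as
`adjStar` does, and the sites of spin `0` exactly as `adj` does. -/
def mainDiag (σ : Config) (i j : ℤ) : Prop := σ (i, j) = true ∧ σ (i + 1, j + 1) = true

lemma edge_adjStar (M : ℤ → ℤ → Prop) (e : TEdge) : adjStar (fstEnd M e) (sndEnd M e) := by
  cases e with
  | hor i j | ver i j => simp [fstEnd, sndEnd, adjStar]
  | diag i j => simp only [fstEnd, sndEnd]; split_ifs <;> simp [adjStar]

lemma edge_reach_zero (σ : Config) (e : TEdge) (h1 : σ (fstEnd (mainDiag σ) e) = false)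
    (h2 : σ (sndEnd (mainDiag σ) e) = false) :
    Reach adj {z | σ z = false} (fstEnd (mainDiag σ) e) (sndEnd (mainDiag σ) e) := by
  cases e with
  | hor i j | ver i j =>
    exact Relation.ReflTransGen.single ⟨by simp [adj, fstEnd, sndEnd], h1, h2⟩
  | diag i j =>
    by_cases hM : mainDiag σ i j
    · simp only [fstEnd, hM, if_true] at h1
      have := hM.1
      simp_all
    · simp only [fstEnd, sndEnd, hM, if_false] at h1 h2 ⊢
      obtain h | h : σ (i, j) = false ∨ σ (i + 1, j + 1) = false := by
        simp only [mainDiag, not_and_or, Bool.not_eq_true] at hM; exact hM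
      · exact (Relation.ReflTransGen.single (b := (i, j)) ⟨by simp [adj], h1, h⟩).tail
          ⟨by simp [adj], h, h2⟩
      · exact (Relation.ReflTransGen.single (b := (i + 1, j + 1)) ⟨by simp [adj], h1, h⟩).tail
          ⟨by simp [adj], h, h2⟩

/-- A function which does not change along the edges of the triangulation inside a `1*`cluster
is constant on it. -/
lemma const_of_edges {σ : Config} {I : Set Site} (hI : IsCluster1 σ I) (k : Site → ZMod 2)
    (hk : ∀ e, fstEnd (mainDiag σ) e ∈ I → sndEnd (mainDiag σ) e ∈ I →
      k (fstEnd (mainDiag σ) e) = k (sndEnd (mainDiag σ) e)) :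
    ∀ x ∈ I, ∀ y ∈ I, k x = k y := by
  obtain ⟨-, hI1, hIc, hIm⟩ := hI
  have khor : ∀ i j, (i, j) ∈ I → (i + 1, j) ∈ I → k (i, j) = k (i + 1, j) :=
    fun i j => hk (.hor i j)
  have kver : ∀ i j, (i, j) ∈ I → (i, j + 1) ∈ I → k (i, j) = k (i, j + 1) :=
    fun i j => hk (.ver i j)
  have kmain : ∀ i j, (i, j) ∈ I → (i + 1, j + 1) ∈ I → k (i, j) = k (i + 1, j + 1) := by
    intro i j h1 h2
    have hM : mainDiag σ i j := ⟨hI1 _ h1, hI1 _ h2⟩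
    simpa [fstEnd, sndEnd, hM, h1, h2] using hk (.diag i j)
  have kanti : ∀ i j, (i + 1, j) ∈ I → (i, j + 1) ∈ I → k (i + 1, j) = k (i, j + 1) := by
    intro i j h1 h2
    by_cases hM : mainDiag σ i j
    · -- The square is cut along the other diagonal, whose lower end is a detour.
      have h3 : (i, j) ∈ I := hIm _ h1 _ (by simp [adjStar]) hM.1
      rw [← khor i j h3 h1, kver i j h3 h2]
    · simpa [fstEnd, sndEnd, hM, h1, h2] using hk (.diag i j)
  have kstar : ∀ u v, adjStar u v → u ∈ I → v ∈ I → k u = k v := by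
    intro u v huv hu hv
    obtain ⟨i, j, h⟩ := adjStar_cases huv
    rcases h with ⟨rfl, rfl⟩ | ⟨rfl, rfl⟩ | ⟨rfl, rfl⟩ | ⟨rfl, rfl⟩ | ⟨rfl, rfl⟩ | ⟨rfl, rfl⟩ |
      ⟨rfl, rfl⟩ | ⟨rfl, rfl⟩
    · exact khor i j hu hv
    · exact (khor i j hv hu).symm
    · exact kver i j hu hv
    · exact (kver i j hv hu).symm
    · exact kmain i j hu hv
    · exact (kmain i j hv hu).symm
    · exact kanti i j hu hv
    · exact (kanti i j hv hu).symm
  intro x hx y hy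
  have := (joinedIn_iff.1 (hIc x hx y hy)).2
  induction this with
  | refl => rfl
  | tail _ hbc ih => exact (ih hbc.2.1).trans (kstar _ _ hbc.1 hbc.2.1 hbc.2.2)

/-- The coboundary of `h`, kept only on pairs inside `I` or touching `F`. -/
noncomputable def cut (F I : Set Site) (h : Site → ZMod 2) (u v : Site) : ZMod 2 :=
  if u ∈ F ∨ v ∈ F ∨ (u ∈ I ∧ v ∈ I) then h u + h v else 0

lemma cut_comm (F I : Set Site) (h : Site → ZMod 2) (u v : Site) :
    cut F I h u v = cut F I h v u := by
  simp only [cut]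
  rw [add_comm (h u)]
  congr 1
  simp only [eq_iff_iff]
  tauto

/-- Adjacency of sites in the triangulation, as far as it matters for `cut_triangle`: a set `F` of
`0`clusters contains both or neither of two neighbours of spin `0`. -/
def CutAdj (σ : Config) (F : Set Site) (u v : Site) : Prop :=
  adjStar u v ∧ (σ u = false → σ v = false → (u ∈ F ↔ v ∈ F))

lemma CutAdj.symm {σ : Config} {F : Set Site} {u v : Site} (h : CutAdj σ F u v) :
    CutAdj σ F v u :=
  ⟨adjStar_symm h.1, fun a b => (h.2 b a).symm⟩

/-- The cochain `cut F I h` is closed on every triangle off `Z`, if `I` is a `1*`cluster and `F` a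
union of `0`clusters containing all sites of spin `0` off `Z` next to a jump of `h`. -/
lemma cut_triangle {σ : Config} {F I Z : Set Site} {h : Site → ZMod 2}
    (hI : IsCluster1 σ I) (hF0 : ∀ y ∈ F, σ y = false) (h0 : ∀ x ∉ I, h x = 0)
    (hnear : ∀ u v w, u ∈ I → v ∈ I → adjStar u v → h u ≠ h v → adjStar u w → σ w = false →
      w ∉ Z → w ∈ F)
    (u v w : Site) (huv : CutAdj σ F u v) (hvw : CutAdj σ F v w) (huw : CutAdj σ F u w)
    (hu : u ∉ Z) (hv : v ∉ Z) (hw : w ∉ Z) :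
    cut F I h u v + cut F I h v w + cut F I h u w = 0 := by
  obtain ⟨-, hI1, -, hIm⟩ := hI
  have hIstar : ∀ u v, adjStar u v → σ u = true → σ v = true → (u ∈ I ↔ v ∈ I) :=
    fun u v huv a b => ⟨fun hu => hIm u hu v huv b, fun hv => hIm v hv u (adjStar_symm huv) a⟩
  have hI0 : ∀ u, σ u = false → u ∉ I := fun u a h' => by simp [hI1 u h'] at a
  have hF1 : ∀ u, σ u = true → u ∉ F := fun u a h' => by simp [hF0 u h'] at a
  -- Two vertices of spin `1` and a third one of spin `0`.
  have two : ∀ u v w, CutAdj σ F u v → CutAdj σ F v w → CutAdj σ F u w → w ∉ Z →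
      σ u = true → σ v = true → σ w = false →
      cut F I h u v + cut F I h v w + cut F I h u w = 0 := by
    intro u v w huv hvw huw hwZ su sv sw
    have e1 := hIstar u v huv.1 su sv
    have huF := hF1 u su
    have hvF := hF1 v sv
    have hwI := hI0 w sw
    have e5 := h0 w hwI
    by_cases hu : u ∈ I
    · have hv := e1.1 hu
      by_cases hw : w ∈ F
      · simp only [cut, hw, hu, hv, e5, true_or, or_true, and_self, if_true]
        grind
      · have heq : h u = h v := by
          by_contra hne
          exact hw (hnear u v w hu hv huv.1 hne huw.1 sw hwZ)
        simp [cut, hw, hu, hv, huF, hvF, hwI, heq, CharTwo.add_self_eq_zero]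
    · have hv : v ∉ I := fun h' => hu (e1.2 h')
      simp [cut, hu, hv, huF, hvF, e5, h0 u hu, h0 v hv]
  -- Two vertices of spin `0` and a third one of arbitrary spin.
  have one : ∀ u v w, CutAdj σ F u v → CutAdj σ F v w → CutAdj σ F u w →
      σ u = false → σ v = false →
      cut F I h u v + cut F I h v w + cut F I h u w = 0 := by
    intro u v w huv hvw huw su sv
    have e1 := huv.2 su sv
    have huI := hI0 u su
    have hvI := hI0 v sv
    have e3 := h0 u huI
    have e4 := h0 v hvI
    have hsame : cut F I h v w = cut F I h u w := by
      simp only [cut, e1, huI, hvI, e3, e4]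
    have hzero : cut F I h u v = 0 := by simp [cut, e3, e4]
    rw [hzero, hsame, zero_add, CharTwo.add_self_eq_zero]
  have three : ∀ u v w, CutAdj σ F u v → CutAdj σ F u w → σ u = true → σ v = true → σ w = true →
      cut F I h u v + cut F I h v w + cut F I h u w = 0 := by
    intro u v w huv huw su sv sw
    have e1 := hIstar u v huv.1 su sv
    have e2 := hIstar u w huw.1 su sw
    simp only [cut, hF1 u su, hF1 v sv, hF1 w sw, ← e1, ← e2, false_or, and_self]
    split_ifs <;> grind
  cases su : σ u <;> cases sv : σ v <;> cases sw : σ w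
  · exact one u v w huv hvw huw su sv
  · exact one u v w huv hvw huw su sv
  · have := one u w v huw hvw.symm huv su sw
    rw [cut_comm F I h v w]; rw [← this]; ring
  · have := two v w u hvw huw.symm huv.symm hu sv sw su
    rw [cut_comm F I h u v, cut_comm F I h u w]; rw [← this]; ring
  · have := one v w u hvw huw.symm huv.symm sv sw
    rw [cut_comm F I h u v, cut_comm F I h u w]; rw [← this]; ring
  · have := two u w v huw hvw.symm huv hv su sw sv
    rw [cut_comm F I h v w]; rw [← this]; ring
  · exact two u v w huv hvw huw hw su sv sw
  · exact three u v w huv huw su sv sw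

/-- One-endedness of a `1*`cluster `I`, when there is a single infinite `0`cluster `Z`: a mod 2
function on `I` which jumps only inside a finite set `D` is constant off a finite set. -/
lemma finite_or_finite {σ : Config} {I Z : Set Site} (hI : IsCluster1 σ I)
    (hZ : IsCluster0 σ Z) (hfin : ∀ S, IsCluster0 σ S → S ≠ Z → S.Finite)
    {D : Set Site} (hD : D.Finite) (h : Site → ZMod 2) (h0 : ∀ x ∉ I, h x = 0)
    (hjump : ∀ x ∈ I, ∀ y ∈ I, adjStar x y → h x ≠ h y → x ∈ D) :
    {x | x ∈ I ∧ h x ≠ 0}.Finite ∨ {x | x ∈ I ∧ h x = 0}.Finite := by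
  have hconst := const_of_edges hI
  obtain ⟨x₀, hx₀⟩ := hI.1
  have hI1 := hI.2.1
  obtain ⟨-, hZ0, hZc, -⟩ := hZ
  -- `F` is the union of the finite `0`clusters close to `D`.
  set F : Set Site := ⋃ x ∈ {x | x ∈ nbhd D ∧ σ x = false ∧ x ∉ Z},
    {y | Reach adj {z | σ z = false} x y} with hFdef
  have hFfin : F.Finite := by
    refine Set.Finite.biUnion ((finite_nbhd hD).subset fun x hx => hx.1) fun x hx => ?_
    refine hfin _ (isCluster0_reach hx.2.1) fun heq => hx.2.2 ?_
    rw [← heq]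
    exact Relation.ReflTransGen.refl
  have hFmem : ∀ y, y ∈ F ↔ ∃ x, (x ∈ nbhd D ∧ σ x = false ∧ x ∉ Z) ∧
      Reach adj {z | σ z = false} x y := by
    intro y; simp only [hFdef, Set.mem_iUnion, exists_prop]; rfl
  have hF0 : ∀ y ∈ F, σ y = false := by
    intro y hy
    obtain ⟨x, hx, hxy⟩ := (hFmem y).1 hy
    exact Reach.mem hxy hx.2.1
  have hFR : ∀ u v, Reach adj {z | σ z = false} u v → u ∈ F → v ∈ F := by
    intro u v huv hu
    obtain ⟨x, hx, hxy⟩ := (hFmem u).1 hu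
    exact (hFmem v).2 ⟨x, hx, hxy.trans huv⟩
  have hFN : ∀ x ∈ nbhd D, σ x = false → x ∉ Z → x ∈ F := fun x h1 h2 h3 =>
    (hFmem x).2 ⟨x, ⟨h1, h2, h3⟩, Relation.ReflTransGen.refl⟩
  have hnear : ∀ u v w, u ∈ I → v ∈ I → adjStar u v → h u ≠ h v → adjStar u w → σ w = false →
      w ∉ Z → w ∈ F := fun u v w hu hv huv hne huw hw hwZ =>
    hFN w ⟨u, hjump u hu v hv huv hne, huw.2⟩ hw hwZ
  have Tedge : ∀ e, CutAdj σ F (fstEnd (mainDiag σ) e) (sndEnd (mainDiag σ) e) := by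
    intro e
    refine ⟨edge_adjStar _ e, fun a b => ⟨hFR _ _ (edge_reach_zero σ e a b), ?_⟩⟩
    exact hFR _ _ (Reach.symm adj_symm (edge_reach_zero σ e a b))
  have psum := cut_triangle hI hF0 h0 hnear
  -- The restricted coboundary as a finitely supported cochain.
  have hsupp :
      {e : TEdge | cut F I h (fstEnd (mainDiag σ) e) (sndEnd (mainDiag σ) e) ≠ 0}.Finite := by
    refine (finite_edgeTouches (mainDiag σ) (hFfin.union hD)).subset fun e he => ?_
    simp only [cut, Set.mem_ofPred_eq, ne_eq, ite_eq_right_iff, not_forall] at he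
    obtain ⟨h1, h2⟩ := he
    rcases h1 with h1 | h1 | h1
    · exact Or.inl (Or.inl h1)
    · exact Or.inr (Or.inl h1)
    · refine Or.inl (Or.inr (hjump _ h1.1 _ h1.2 (edge_adjStar _ e) fun heq => h2 ?_))
      rw [heq, CharTwo.add_self_eq_zero]
  let f : TEdge →₀ ZMod 2 := Finsupp.ofSupportFinite
    (fun e => cut F I h (fstEnd (mainDiag σ) e) (sndEnd (mainDiag σ) e)) hsupp
  have hfe : ∀ e, f e = cut F I h (fstEnd (mainDiag σ) e) (sndEnd (mainDiag σ) e) := fun e => rfl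
  have htouch : ∀ t, cobd (mainDiag σ) f t ≠ 0 → TriTouches (mainDiag σ) Z t := by
    intro t ht
    by_contra hnt
    apply ht
    cases t with
    | low i j =>
      rw [cobd_low, hfe, hfe]
      have a1 := Tedge (.hor i j)
      have a2 := Tedge (.diag i j)
      have a3 := Tedge (.ver i j)
      have a4 := Tedge (.ver (i + 1) j)
      simp only [TriTouches, not_or] at hnt
      obtain ⟨n1, n2, n3⟩ := hnt
      simp only [fstEnd, sndEnd] at *
      split_ifs at * with hM
      · rw [hfe, ← psum _ _ _ a1 a4 a2 n1 n2 n3]; ring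
      · rw [hfe, ← psum _ _ _ a1 a2 a3 n1 n2 n3]
    | up i j =>
      rw [cobd_up, hfe, hfe]
      have a1 := Tedge (.hor i (j + 1))
      have a2 := Tedge (.diag i j)
      have a3 := Tedge (.ver i j)
      have a4 := Tedge (.ver (i + 1) j)
      simp only [TriTouches, not_or] at hnt
      obtain ⟨n1, n2, n3⟩ := hnt
      simp only [fstEnd, sndEnd] at *
      split_ifs at * with hM
      · rw [hfe, ← psum _ _ _ a3 a1 a2 n3 n1 n2]; ring
      · rw [hfe, ← psum _ _ _ a2 a1 a4 n3 n1 n2]; ring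
  obtain ⟨ψ, hψ, hψf⟩ := exists_cobd_eq
    (fun z hz w hw => (joinedIn_iff.1 (hZc z hz w hw)).2) _ htouch (total_cobd _ f)
  obtain ⟨g, hg, hge⟩ := exists_primitive (M := mainDiag σ) (f - ψ) (by rw [map_sub, hψf, sub_self])
  have hk := hconst (fun z => h z + g z) (by
    intro e he1 he2
    have h1 : ψ e = 0 := by
      by_contra hne
      rcases hψ e hne with hz | hz
      · have := hZ0 _ hz; simp [hI1 _ he1] at this
      · have := hZ0 _ hz; simp [hI1 _ he2] at this
    have h2 := hge e
    rw [Finsupp.sub_apply, h1, sub_zero, hfe] at h2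
    simp only [cut, he1, he2, and_self, or_true, if_true] at h2
    grind)
  obtain h1 | h1 : h x₀ + g x₀ = 0 ∨ h x₀ + g x₀ = 1 := by
    generalize h x₀ + g x₀ = a
    revert a; decide
  · left
    refine hg.subset fun x hx hgx => hx.2 ?_
    have := hk x hx.1 x₀ hx₀
    rw [h1] at this
    simp only [hgx, add_zero] at this
    exact this
  · right
    refine hg.subset fun x hx hgx => ?_
    have := hk x hx.1 x₀ hx₀
    rw [h1] at this
    simp only [hgx, hx.2, add_zero] at this
    exact zero_ne_one this

/-- The sites of spin `1` outside `Δ`. -/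
def onesOff (σ : Config) (Δ : Set Site) : Set Site := {z | σ z = true ∧ z ∉ Δ}

/-- Two infinite connected components of a `1*`cluster minus a finite set coincide. -/
lemma reach_of_infinite {σ : Config} {I : Set Site} (h0 : UniqueInfinite0 σ)
    (hI : IsCluster1 σ I) (Δ : Finset Site) {x y : Site} (hx : x ∈ I) (hy : y ∈ I)
    (hxΔ : x ∉ Δ) (hxi : {z | Reach adjStar (onesOff σ Δ) x z}.Infinite)
    (hyi : {z | Reach adjStar (onesOff σ Δ) y z}.Infinite) :
    Reach adjStar (onesOff σ Δ) x y := by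
  obtain ⟨Z, ⟨hZ, -⟩, hZu⟩ := h0
  have hsub : ∀ x ∈ I, ∀ z, Reach adjStar (onesOff σ Δ) x z → z ∈ I := fun x hx z hz =>
    (hz.inside hx fun u hu v huv hv => hI.2.2.2 u hu v huv hv.1).1
  have hxW : x ∈ onesOff σ Δ := ⟨hI.2.1 x hx, hxΔ⟩
  have key := finite_or_finite hI hZ
    (fun S hS hne => by
      by_contra hinf
      exact hne (hZu S ⟨hS, hinf⟩))
    (D := nbhd Δ) (finite_nbhd Δ.finite_toSet)
    (fun z => if Reach adjStar (onesOff σ Δ) x z then 1 else 0)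
    (fun z hz => if_neg fun h => hz (hsub x hx z h))
    (by
      have main : ∀ u ∈ I, ∀ v ∈ I, adjStar u v → Reach adjStar (onesOff σ Δ) x u →
          ¬ Reach adjStar (onesOff σ Δ) x v → v ∈ Δ := by
        intro u _ v hv huv h1 h2
        by_contra hvΔ
        exact h2 (h1.tail ⟨huv, h1.mem hxW, hI.2.1 v hv, hvΔ⟩)
      intro u hu v hv huv hne
      by_cases h1 : Reach adjStar (onesOff σ Δ) x u <;>
        by_cases h2 : Reach adjStar (onesOff σ Δ) x v
      · simp [h1, h2] at hne
      · exact ⟨v, main u hu v hv huv h1 h2, (adjStar_symm huv).2⟩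
      · exact ⟨u, main v hv u hu (adjStar_symm huv) h2 h1, by simp⟩
      · simp [h1, h2] at hne)
  by_contra hxy
  rcases key with h | h
  · exact hxi (h.subset fun z hz => ⟨hsub x hx z hz, by simpa using hz⟩)
  · refine hyi (h.subset fun z hz => ⟨hsub y hy z hz, ?_⟩)
    have : ¬ Reach adjStar (onesOff σ Δ) x z := fun h' =>
      hxy (h'.trans (Reach.symm adjStar_symm hz))
    simp [this]

/-- The finite connected components of an infinite `1*`cluster minus a finite set `Δ` cover only
finitely many sites, because each of them comes close to `Δ`. -/
lemma finite_bad {σ : Config} {I : Set Site} (hI : IsCluster1 σ I) (hinf : I.Infinite)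
    (Δ : Finset Site) :
    {x | x ∈ I ∧ {z | Reach adjStar (onesOff σ Δ) x z}.Finite}.Finite := by
  have hfin : (⋃ w ∈ {w | w ∈ nbhd (Δ : Set Site) ∧
      {z | Reach adjStar (onesOff σ Δ) w z}.Finite},
      {z | Reach adjStar (onesOff σ Δ) w z}).Finite :=
    ((finite_nbhd Δ.finite_toSet).subset fun x hx => hx.1).biUnion fun w hw => hw.2
  refine hfin.subset ?_
  rintro x ⟨hx, hxf⟩
  obtain ⟨w, hw, hwΔ⟩ : ∃ w, Reach adjStar (onesOff σ Δ) x w ∧ w ∈ nbhd (Δ : Set Site) := by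
    by_contra hno
    push Not at hno
    apply hinf
    refine hxf.subset fun y hy => ?_
    refine ((joinedIn_iff.1 (hI.2.2.1 x hx y hy)).2.inside
      (S := {z | Reach adjStar (onesOff σ Δ) x z}) Relation.ReflTransGen.refl ?_).1
    intro u hu v huv hv
    have huΔ : u ∉ Δ := fun h => hno u hu ⟨u, h, by simp⟩
    have hvΔ : v ∉ Δ := fun h => hno u hu ⟨v, h, (adjStar_symm huv).2⟩
    have huI : u ∈ I := (Reach.inside hu hx fun a ha b hab hb => hI.2.2.2 a ha b hab hb.1).1
    exact Relation.ReflTransGen.tail hu ⟨huv, ⟨hI.2.1 u huI, huΔ⟩, hI.2.1 v hv, hvΔ⟩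
  have hwx := Reach.symm adjStar_symm hw
  simp only [Set.mem_iUnion]
  exact ⟨w, ⟨hwΔ, hxf.subset fun z hz => hw.trans hz⟩, hwx⟩

end Clusters

/-! ### The events and their probabilities -/

section Probability

/-- The event that `x` and `y` are joined by a `1*`path avoiding `Δ`. -/
def joinEvent (Δ : Set Site) (x y : Site) : Set Config :=
  {σ | ∃ P : List Site, starPathBetweenAvoiding σ Δ x y P}

lemma mem_joinEvent {σ : Config} {Δ : Set Site} {x y : Site} :
    σ ∈ joinEvent Δ x y ↔ x ∈ onesOff σ Δ ∧ Reach adjStar (onesOff σ Δ) x y := by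
  rw [← joinedIn_iff]
  constructor
  · rintro ⟨P, ⟨-, hc, h1⟩, hh, hl, hΔ⟩
    exact ⟨P, hc, fun z hz => ⟨h1 z hz, hΔ z hz⟩, hh, hl⟩
  · rintro ⟨P, hc, h1, hh, hl⟩
    refine ⟨P, ⟨?_, hc, fun z hz => (h1 z hz).1⟩, hh, hl, fun z hz => (h1 z hz).2⟩
    rintro rfl
    simp at hh

lemma measurableSet_joinEvent (Δ : Set Site) (x y : Site) : MeasurableSet (joinEvent Δ x y) := by
  have : joinEvent Δ x y = ⋃ P : List Site, {σ | starPathBetweenAvoiding σ Δ x y P} := by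
    ext σ; simp [joinEvent]
  rw [this]
  refine MeasurableSet.iUnion fun P => ?_
  have h1 : MeasurableSet {σ : Config | ∀ z ∈ P, σ z = true} := by
    have : {σ : Config | ∀ z ∈ P, σ z = true} =
        ⋂ z : {z // z ∈ P}, (fun σ : Config => σ z.1) ⁻¹' {true} := by
      ext σ; simp
    rw [this]
    exact MeasurableSet.iInter fun z => measurable_pi_apply z.1 (measurableSet_singleton _)
  by_cases h : P ≠ [] ∧ P.IsChain adjStar ∧ P.head? = some x ∧ P.getLast? = some y ∧ ∀ z ∈ P, z ∉ Δ
  · convert h1 using 1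
    ext σ
    exact ⟨fun h' => h'.1.2.2, fun h' => ⟨⟨h.1, h.2.1, h'⟩, h.2.2⟩⟩
  · convert MeasurableSet.empty using 1
    ext σ
    simp only [Set.mem_empty_iff_false, iff_false]
    exact fun h' => h ⟨h'.1.1, h'.1.2.1, h'.2⟩

/-- The event that the component of `x` in the sites of spin `1` outside `Δ` is infinite. -/
def infEvent (Δ : Set Site) (x : Site) : Set Config :=
  {σ | {y | σ ∈ joinEvent Δ x y}.Infinite}

lemma measurableSet_infEvent (Δ : Set Site) (x : Site) : MeasurableSet (infEvent Δ x) := by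
  have : infEvent Δ x = ⋂ s : Finset Site, ⋃ y : {y : Site // y ∉ s}, joinEvent Δ x y.1 := by
    ext σ
    simp only [infEvent, Set.mem_iInter, Set.mem_iUnion]
    constructor
    · intro h s
      obtain ⟨y, hy, hys⟩ := Set.Infinite.exists_notMem_finset h s
      exact ⟨⟨y, hys⟩, hy⟩
    · intro h hfin
      obtain ⟨⟨y, hys⟩, hy⟩ := h (Set.Finite.toFinset hfin)
      exact hys (by simpa using hy)
  rw [this]
  exact MeasurableSet.iInter fun s => MeasurableSet.iUnion fun y => measurableSet_joinEvent _ _ _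

lemma inInfinite1_iff {σ : Config} {x : Site} : InInfinite1 σ x ↔ σ ∈ infEvent ∅ x := by
  have hW : onesOff σ ∅ = {z | σ z = true} := by ext z; simp [onesOff]
  constructor
  · rintro ⟨S, hS, hinf, hx⟩
    refine hinf.mono fun y hy => mem_joinEvent.2 ⟨⟨hS.2.1 x hx, by simp⟩, ?_⟩
    rw [hW]
    refine Relation.ReflTransGen.mono ?_ _ _ (joinedIn_iff.1 (hS.2.2.1 x hx y hy)).2
    exact fun a b h => ⟨h.1, hS.2.1 _ h.2.1, hS.2.1 _ h.2.2⟩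
  · intro h
    obtain ⟨y, hy⟩ := Set.Infinite.nonempty h
    have hx := (mem_joinEvent.1 hy).1.1
    refine ⟨_, isCluster1_reach hx, ?_, Relation.ReflTransGen.refl⟩
    refine Set.Infinite.mono ?_ h
    intro y hy
    have := (mem_joinEvent.1 hy).2
    rwa [hW] at this

lemma increasing_infEvent (Δ : Set Site) (x : Site) : IncreasingEvent (infEvent Δ x) := by
  intro ξ η hξ hle
  refine Set.Infinite.mono ?_ hξ
  rintro y ⟨P, ⟨h1, h2, h3⟩, h4⟩
  refine ⟨P, ⟨h1, h2, fun z hz => ?_⟩, h4⟩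
  have := hle z
  rw [h3 z hz] at this
  exact top_le_iff.1 this

end Probability

/-- Lemma 2: far away pairs of sites are `1*`connected off `Δ` with probability `≥ c²/2`. -/
theorem statement5 (μ : Measure Config) [IsProbabilityMeasure μ]
    (hpa : PositivelyAssociated μ)
    (h0 : ∀ᵐ σ ∂μ, UniqueInfinite0 σ)
    (h1 : ∀ᵐ σ ∂μ, AtMostOneInfinite1 σ)
    (c : ℝ≥0∞) (hc : 0 < c)
    (hlb : ∀ x : Site, c ≤ μ {σ | InInfinite1 σ x})
    (Δ : Finset Site) :
    ∃ Γ : Finset Site, ∀ x y : Site, x ∉ Γ → y ∉ Γ →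
      c ^ 2 / 2 ≤ μ {σ | ∃ P : List Site, starPathBetweenAvoiding σ ↑Δ x y P} := by
  have hc1 : c ≤ 1 := (hlb 0).trans prob_le_one
  have hctop : c ^ 2 / 2 ≠ ∞ :=
    ENNReal.div_ne_top (ENNReal.pow_ne_top (hc1.trans_lt ENNReal.one_lt_top).ne) (by simp)
  have hcpos : 0 < c ^ 2 / 2 := ENNReal.div_pos (pow_ne_zero 2 hc.ne') (by simp)
  let box : ℕ → Finset Site := fun n => Finset.Icc (-(n : ℤ), -(n : ℤ)) ((n : ℤ), (n : ℤ))
  -- `B n`: some site outside the `n`th box is in an infinite `1*`cluster, but not in an infinite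
  -- component off `Δ`.
  let B : ℕ → Set Config := fun n =>
    ⋃ x : {x : Site // x ∉ box n}, infEvent ∅ x.1 \ infEvent Δ x.1
  have hBmeas : ∀ n, MeasurableSet (B n) := fun n => MeasurableSet.iUnion fun x =>
    (measurableSet_infEvent _ _).diff (measurableSet_infEvent _ _)
  have hBanti : Antitone B := by
    intro n m hnm σ hσ
    simp only [B, Set.mem_iUnion] at hσ ⊢
    obtain ⟨⟨x, hx⟩, hσ⟩ := hσ
    refine ⟨⟨x, fun h => hx ?_⟩, hσ⟩
    simp only [box, Finset.mem_Icc, Prod.le_def] at h ⊢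
    omega
  have hgood : ∀ {σ : Config} {I : Set Site} {x : Site}, IsCluster1 σ I → x ∈ I →
      (x ∉ Δ → {z | Reach adjStar (onesOff σ Δ) x z}.Infinite) → x ∉ Δ → σ ∈ infEvent Δ x := by
    intro σ I x hI hx h hxΔ
    exact (h hxΔ).mono fun z hz => mem_joinEvent.2 ⟨⟨hI.2.1 x hx, hxΔ⟩, hz⟩
  have hBlim : μ (⋂ n, B n) = 0 := by
    rw [← nonpos_iff_eq_zero, ← measure_empty (μ := μ)]
    refine measure_mono_ae ?_
    filter_upwards [h1] with σ hσ hmem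
    exfalso
    have hmem : ∀ n, σ ∈ B n := Set.mem_iInter.1 hmem
    have hinf : ∀ n, ∃ x : Site, x ∉ box n ∧ InInfinite1 σ x ∧ σ ∉ infEvent Δ x := by
      intro n
      obtain ⟨⟨x, hx⟩, h⟩ := Set.mem_iUnion.1 (hmem n)
      exact ⟨x, hx, inInfinite1_iff.2 h.1, h.2⟩
    obtain ⟨-, -, ⟨I, hI, hIinf, -⟩, -⟩ := hinf 0
    have hfin := (finite_bad hI hIinf Δ).union Δ.finite_toSet
    obtain ⟨n, hn⟩ : ∃ n : ℕ, ∀ x ∈ hfin.toFinset, x ∈ box n := by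
      refine ⟨hfin.toFinset.sup fun x => x.1.natAbs + x.2.natAbs, fun x hx => ?_⟩
      have := Finset.le_sup (f := fun x : Site => x.1.natAbs + x.2.natAbs) hx
      simp only [box, Finset.mem_Icc, Prod.le_def]
      omega
    obtain ⟨x, hxn, ⟨S, hS, hSinf, hxS⟩, hx⟩ := hinf n
    have hSI := hσ S I hS hSinf hI hIinf
    subst hSI
    have hxnot : x ∉ hfin.toFinset := fun h => hxn (hn x h)
    simp only [Set.Finite.mem_toFinset, Set.mem_union, not_or] at hxnot
    refine hx (hgood hI hxS (fun _ hf => hxnot.1 ⟨hxS, hf⟩) hxnot.2)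
  have htend := tendsto_measure_iInter_atTop (μ := μ) (fun n => (hBmeas n).nullMeasurableSet)
    hBanti ⟨0, measure_ne_top _ _⟩
  rw [hBlim] at htend
  obtain ⟨n, hn⟩ := (htend.eventually_lt_const hcpos).exists
  refine ⟨box n ∪ Δ, fun x y hx hy => ?_⟩
  simp only [Finset.mem_union, not_or] at hx hy
  change c ^ 2 / 2 ≤ μ (joinEvent Δ x y)
  have hset : ∀ x, {σ | InInfinite1 σ x} = infEvent ∅ x := fun x => by
    ext σ; exact inInfinite1_iff
  have hA : c ^ 2 ≤ μ (infEvent ∅ x ∩ infEvent ∅ y) := by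
    refine le_trans ?_ (hpa _ _ (measurableSet_infEvent _ x) (measurableSet_infEvent _ y)
      (increasing_infEvent _ x) (increasing_infEvent _ y))
    rw [sq, ← hset, ← hset]
    gcongr
    · exact hlb x
    · exact hlb y
  have hsub : ∀ᵐ σ ∂μ, σ ∈ infEvent ∅ x ∩ infEvent ∅ y →
      σ ∈ joinEvent (Δ : Set Site) x y ∪ B n := by
    filter_upwards [h0, h1] with σ hσ0 hσ1 hmem
    by_cases hB : σ ∈ B n
    · exact Or.inr hB
    left
    obtain ⟨hxσ, hyσ⟩ := hmem
    have hreach : ∀ z, z ∉ box n → σ ∈ infEvent ∅ z →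
        {w | Reach adjStar (onesOff σ Δ) z w}.Infinite := by
      intro z hz hzσ
      have : σ ∈ infEvent Δ z := by
        by_contra hno
        exact hB (Set.mem_iUnion.2 ⟨⟨z, hz⟩, hzσ, hno⟩)
      exact Set.Infinite.mono (fun w hw => (mem_joinEvent.1 hw).2) this
    obtain ⟨I, hI, hIinf, hxI⟩ := inInfinite1_iff.2 hxσ
    obtain ⟨J, hJ, hJinf, hyJ⟩ := inInfinite1_iff.2 hyσ
    have hIJ := hσ1 J I hJ hJinf hI hIinf
    subst hIJ
    exact mem_joinEvent.2 ⟨⟨hI.2.1 x hxI, hx.2⟩,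
      reach_of_infinite hσ0 hI Δ hxI hyJ hx.2 (hreach x hx.1 hxσ) (hreach y hy.1 hyσ)⟩
  have hfinal : c ^ 2 / 2 + c ^ 2 / 2 ≤ μ (joinEvent Δ x y) + c ^ 2 / 2 := by
    rw [ENNReal.add_halves]
    calc c ^ 2 ≤ μ (joinEvent Δ x y ∪ B n) := hA.trans (measure_mono_ae hsub)
      _ ≤ μ (joinEvent Δ x y) + μ (B n) := measure_union_le _ _
      _ ≤ μ (joinEvent Δ x y) + c ^ 2 / 2 := by gcongr; exact hn.le
  exact (ENNReal.add_le_add_iff_right hctop).1 hfinal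

end Percolation
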